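/- arXiv:0706.1287 — 5 statements merged into one kernel-verified Lean document; each statement's English description precedes it below -/
import Mathlib

section
/- For every natural number p ≥ 4, the number of non-chordal simple graphs on the labeled vertex set Fin p having exactly 4 edges equals 3 · C(p,4). (Paper's Lemma 2, part 1: F_{p,4} = binom(p,4) × 3.) -/
/-- A simple graph is chordal ("decomposable") if for every `n ≥ 4` there is no
graph embedding (induced subgraph copy) of the `n`-cycle into it. -/
def IsChordal {V : Type*} (G : SimpleGraph V) : Prop :=
  ∀ n : ℕ, 4 ≤ n → IsEmpty (SimpleGraph.cycleGraph n ↪g G)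

/-- `Fcount p k` is the number of non-chordal simple graphs on `Fin p` with exactly `k` edges. -/
noncomputable def Fcount (p k : ℕ) : ℕ :=
  Nat.card {G : SimpleGraph (Fin p) // G.edgeSet.ncard = k ∧ ¬ IsChordal G}

/-!
A non-chordal graph contains an induced cycle of length at least `4`, hence at least `4` edges; if
it has exactly `4`, they form a `4`-cycle and all other vertices are isolated. Such graphs are the
images of `cycleGraph 4` under embeddings of its vertices, and two embeddings have the same image
exactly when they differ by an automorphism of the cycle. An automorphism of an `n`-cycle is
determined by where it sends one oriented edge, and every target is possible, so there are `2 * n`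
of them. It remains to divide the number `p (p - 1) (p - 2) (p - 3)` of embeddings by `8`.
-/

section MapEmbedding

variable {V W : Type*} {H : SimpleGraph W}

theorem ncard_edgeSet_map (f : W ↪ V) : (H.map f).edgeSet.ncard = H.edgeSet.ncard := by
  rw [SimpleGraph.edgeSet_map]
  exact Set.ncard_image_of_injective _ f.sym2Map.injective

theorem eq_of_le_of_ncard_edgeSet_le {G G' : SimpleGraph V} (hle : G ≤ G')
    (hfin : G'.edgeSet.Finite) (hcard : G'.edgeSet.ncard ≤ G.edgeSet.ncard) : G = G' :=
  SimpleGraph.edgeSet_injective <|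
    Set.eq_of_subset_of_ncard_le (SimpleGraph.edgeSet_mono hle) hcard hfin

theorem range_eq_of_map_eq (hH : H.support = Set.univ) {f g : W ↪ V} (h : H.map g = H.map f) :
    Set.range g = Set.range f := by
  simpa only [SimpleGraph.support_map, hH, Set.image_univ] using congrArg SimpleGraph.support h

theorem exists_iso_trans_eq_of_map_eq (hH : H.support = Set.univ) {f g : W ↪ V}
    (h : H.map g = H.map f) : ∃ σ : H ≃g H, σ.toEquiv.toEmbedding.trans f = g := by
  let σ : W ≃ W := (Equiv.ofInjective g g.injective).trans <|
    (Equiv.setCongr (range_eq_of_map_eq hH h)).trans (Equiv.ofInjective f f.injective).symm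
  have hσ (w : W) : f (σ w) = g w := Equiv.apply_ofInjective_symm f.injective _
  refine ⟨⟨σ, fun {u v} ↦ ?_⟩, Function.Embedding.ext hσ⟩
  calc H.Adj (σ u) (σ v) ↔ (H.map f).Adj (f (σ u)) (f (σ v)) := SimpleGraph.map_adj_apply.symm
    _ ↔ (H.map g).Adj (g u) (g v) := by rw [hσ, hσ, h]
    _ ↔ H.Adj u v := SimpleGraph.map_adj_apply

theorem map_iso_eq_self (σ : H ≃g H) : H.map σ = H := by
  have hcomap : H.comap σ.symm = H := by
    ext u v
    exact σ.symm.map_adj_iff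
  exact (SimpleGraph.comap_symm H σ.toEquiv).symm.trans hcomap

theorem map_iso_trans (σ : H ≃g H) (f : W ↪ V) :
    H.map (σ.toEquiv.toEmbedding.trans f) = H.map f :=
  calc H.map (f ∘ σ) = (H.map σ).map f := (SimpleGraph.map_map ..).symm
    _ = H.map f := by rw [map_iso_eq_self]

theorem bijective_iso_trans (hH : H.support = Set.univ) (f : W ↪ V) :
    Function.Bijective fun σ : H ≃g H ↦
      (⟨σ.toEquiv.toEmbedding.trans f, map_iso_trans σ f⟩ : {g : W ↪ V // H.map g = H.map f}) := by
  constructor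
  · intro σ τ h
    ext w
    exact f.injective (DFunLike.congr_fun (congrArg Subtype.val h) w)
  · rintro ⟨g, hg⟩
    obtain ⟨σ, hσ⟩ := exists_iso_trans_eq_of_map_eq hH hg
    exact ⟨σ, Subtype.ext hσ⟩

theorem natCard_range_map_mul_natCard_iso (hH : H.support = Set.univ) :
    Nat.card (Set.range fun f : W ↪ V ↦ H.map f) * Nat.card (H ≃g H) = Nat.card (W ↪ V) := by
  let F : (W ↪ V) → SimpleGraph V := fun f ↦ H.map f
  have nonempty_fiber_equiv (G : Set.range F) :
      Nonempty ({g : W ↪ V // Set.rangeFactorization F g = G} ≃ (H ≃g H)) := by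
    obtain ⟨_, f, rfl⟩ := G
    exact ⟨(Equiv.subtypeEquivRight fun _ ↦ Subtype.ext_iff).trans
      (Equiv.ofBijective _ (bijective_iso_trans hH f)).symm⟩
  calc Nat.card (Set.range F) * Nat.card (H ≃g H)
      = Nat.card (Set.range F × (H ≃g H)) := (Nat.card_prod _ _).symm
    _ = Nat.card (Σ _ : Set.range F, H ≃g H) := Nat.card_congr (Equiv.sigmaEquivProd _ _).symm
    _ = Nat.card (Σ G : Set.range F, {g : W ↪ V // Set.rangeFactorization F g = G}) :=
      Nat.card_congr (Equiv.sigmaCongrRight fun G ↦ (nonempty_fiber_equiv G).some.symm)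
    _ = Nat.card (W ↪ V) := Nat.card_congr (Equiv.sigmaFiberEquiv _)

end MapEmbedding

section CycleGraph

open SimpleGraph

variable {n : ℕ}

theorem card_edgeFinset_cycleGraph (hn : 3 ≤ n) : (cycleGraph n).edgeFinset.card = n := by
  obtain ⟨n, rfl⟩ := Nat.exists_eq_add_of_le' hn
  have h := (cycleGraph (n + 3)).sum_degrees_eq_twice_card_edges
  simp only [cycleGraph_degree_three_le, Finset.sum_const, Finset.card_univ, Fintype.card_fin,
    smul_eq_mul] at h
  lia

theorem ncard_edgeSet_cycleGraph (hn : 3 ≤ n) : (cycleGraph n).edgeSet.ncard = n := by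
  rw [← coe_edgeFinset, Set.ncard_coe_finset, card_edgeFinset_cycleGraph hn]

theorem cycleGraph_adj_add_one (u : Fin (n + 2)) : (cycleGraph (n + 2)).Adj u (u + 1) := by
  simp [cycleGraph_adj]

theorem cycleGraph_adj_zero_one : (cycleGraph (n + 2)).Adj 0 1 := by
  simp [cycleGraph_adj]

theorem support_cycleGraph : (cycleGraph (n + 2)).support = Set.univ :=
  Set.eq_univ_of_forall fun u ↦ (cycleGraph_adj_add_one u).mem_support_left

theorem cycleGraph_neighbor_unique {c x y z : Fin (n + 2)} (hx : (cycleGraph (n + 2)).Adj c x)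
    (hy : (cycleGraph (n + 2)).Adj c y) (hz : (cycleGraph (n + 2)).Adj c z) (hxz : x ≠ z)
    (hyz : y ≠ z) : x = y := by
  simp only [← mem_neighborSet, cycleGraph_neighborSet, Set.mem_insert_iff,
    Set.mem_singleton_iff] at hx hy hz
  grind

/-- The rotation `u ↦ a + u` of a cycle, as a graph automorphism. -/
def cycleGraphRotation (a : Fin (n + 2)) : cycleGraph (n + 2) ≃g cycleGraph (n + 2) where
  toEquiv := Equiv.addLeft a
  map_rel_iff' := by simp [cycleGraph_adj]

/-- The reflection `u ↦ a - u` of a cycle, as a graph automorphism. -/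
def cycleGraphReflection (a : Fin (n + 2)) : cycleGraph (n + 2) ≃g cycleGraph (n + 2) where
  toEquiv := Equiv.subLeft a
  map_rel_iff' := by simp [cycleGraph_adj, or_comm]

theorem fin_add_one_add_one_ne (u : Fin (n + 3)) : u + 1 + 1 ≠ u := by
  rw [add_assoc, ne_eq, add_eq_left]
  exact ne_of_beq_false rfl

theorem cycleGraph_iso_ext {σ τ : cycleGraph (n + 3) ≃g cycleGraph (n + 3)} (h₀ : σ 0 = τ 0)
    (h₁ : σ 1 = τ 1) : σ = τ := by
  have next_eq (u : Fin (n + 3)) (hu : σ u = τ u) (hu' : σ (u + 1) = τ (u + 1)) :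
      σ (u + 1 + 1) = τ (u + 1 + 1) := by
    refine cycleGraph_neighbor_unique (c := σ (u + 1)) (z := σ u) ?_ ?_ ?_ ?_ ?_
    · exact σ.map_adj_iff.2 (cycleGraph_adj_add_one _)
    · exact hu' ▸ τ.map_adj_iff.2 (cycleGraph_adj_add_one _)
    · exact σ.map_adj_iff.2 (cycleGraph_adj_add_one _).symm
    · exact σ.injective.ne (fin_add_one_add_one_ne u)
    · exact hu ▸ τ.injective.ne (fin_add_one_add_one_ne u)
  have agree (u : Fin (n + 3)) : σ u = τ u ∧ σ (u + 1) = τ (u + 1) := by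
    induction u using Fin.induction with
    | zero => simpa using ⟨h₀, h₁⟩
    | succ i ih =>
      rw [← Fin.coeSucc_eq_succ]
      exact ⟨ih.2, next_eq _ ih.1 ih.2⟩
  exact RelIso.ext fun u ↦ (agree u).1

theorem exists_cycleGraph_iso_of_adj {a b : Fin (n + 2)} (h : (cycleGraph (n + 2)).Adj a b) :
    ∃ σ : cycleGraph (n + 2) ≃g cycleGraph (n + 2), σ 0 = a ∧ σ 1 = b := by
  rw [← mem_neighborSet, cycleGraph_neighborSet] at h
  rcases h with rfl | rfl
  · exact ⟨cycleGraphReflection a, sub_zero a, rfl⟩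
  · exact ⟨cycleGraphRotation a, add_zero a, rfl⟩

theorem bijective_iso_mapDart_cycleGraph :
    Function.Bijective fun σ : cycleGraph (n + 3) ≃g cycleGraph (n + 3) ↦
      σ.toEmbedding.toHom.mapDart ⟨(0, 1), cycleGraph_adj_zero_one⟩ := by
  constructor
  · intro σ τ h
    exact cycleGraph_iso_ext (congrArg (fun d ↦ d.fst) h) (congrArg (fun d ↦ d.snd) h)
  · rintro ⟨⟨a, b⟩, hab⟩
    obtain ⟨σ, rfl, rfl⟩ := exists_cycleGraph_iso_of_adj hab
    exact ⟨σ, rfl⟩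

theorem natCard_iso_cycleGraph (hn : 3 ≤ n) :
    Nat.card (cycleGraph n ≃g cycleGraph n) = 2 * n := by
  obtain ⟨n, rfl⟩ := Nat.exists_eq_add_of_le' hn
  rw [Nat.card_congr (.ofBijective _ bijective_iso_mapDart_cycleGraph),
    Nat.card_eq_fintype_card, dart_card_eq_twice_card_edges, card_edgeFinset_cycleGraph hn]

theorem natCard_range_map_cycleGraph_mul (hn : 3 ≤ n) (V : Type*) [Finite V] :
    Nat.card (Set.range fun f : Fin n ↪ V ↦ (cycleGraph n).map f) * (2 * n) =
      (Nat.card V).descFactorial n := by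
  have hsupp : (cycleGraph n).support = Set.univ := by
    obtain ⟨n, rfl⟩ := Nat.exists_eq_add_of_le' hn
    exact support_cycleGraph
  have := Fintype.ofFinite V
  rw [← natCard_iso_cycleGraph hn, natCard_range_map_mul_natCard_iso hsupp]
  simp

end CycleGraph

section Chordal

open SimpleGraph

variable {V : Type*}

theorem not_isChordal_map_cycleGraph {n : ℕ} (hn : 4 ≤ n) (f : Fin n ↪ V) :
    ¬ IsChordal ((cycleGraph n).map f) :=
  fun h ↦ (h n hn).false (Embedding.map f _)

theorem ncard_edgeSet_eq_four_and_not_isChordal_iff {G : SimpleGraph V} :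
    G.edgeSet.ncard = 4 ∧ ¬ IsChordal G ↔
      G ∈ Set.range fun f : Fin 4 ↪ V ↦ (cycleGraph 4).map f := by
  constructor
  · rintro ⟨hG, hchordal⟩
    obtain ⟨n, hn, ⟨f⟩⟩ : ∃ n, 4 ≤ n ∧ Nonempty (cycleGraph n ↪g G) := by
      simpa [IsChordal] using hchordal
    have hfin : G.edgeSet.Finite := Set.finite_of_ncard_ne_zero (by lia)
    have hle : (cycleGraph n).map f.toEmbedding ≤ G :=
      (map_le_iff_le_comap _ _ _).2 f.toHom.le_comap
    have hcard : ((cycleGraph n).map f.toEmbedding).edgeSet.ncard = n :=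
      (ncard_edgeSet_map _).trans (ncard_edgeSet_cycleGraph (by lia))
    obtain rfl : n = 4 := by
      have := Set.ncard_le_ncard (edgeSet_mono hle) hfin
      lia
    exact ⟨f.toEmbedding, eq_of_le_of_ncard_edgeSet_le hle hfin (by lia)⟩
  · rintro ⟨f, rfl⟩
    exact ⟨(ncard_edgeSet_map f).trans (ncard_edgeSet_cycleGraph (by lia)),
      not_isChordal_map_cycleGraph le_rfl f⟩

end Chordal

theorem F_p_four_general (V : Type*) [Finite V] :
    Nat.card {G : SimpleGraph V // G.edgeSet.ncard = 4 ∧ ¬ IsChordal G} =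
      3 * (Nat.card V).choose 4 := by
  have hcard : Nat.card {G : SimpleGraph V // G.edgeSet.ncard = 4 ∧ ¬ IsChordal G} * (2 * 4) =
      (Nat.card V).descFactorial 4 := by
    rw [Nat.card_congr (Equiv.subtypeEquivRight fun _ ↦
      ncard_edgeSet_eq_four_and_not_isChordal_iff)]
    exact natCard_range_map_cycleGraph_mul (by lia) V
  have hchoose : (Nat.card V).descFactorial 4 = 24 * (Nat.card V).choose 4 :=
    Nat.descFactorial_eq_factorial_mul_choose _ _
  lia

theorem F_p_four (p : ℕ) (hp : 4 ≤ p) : Fcount p 4 = 3 * Nat.choose p 4 := by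
  simpa [Fcount] using F_p_four_general (Fin p)
end

section
/- Let G be a chordal simple graph on a finite vertex set, let i and j be adjacent vertices of G, and suppose the graph G′ obtained from G by deleting the single edge {i, j} is also chordal. Then the edge {i, j} is contained in exactly one maximal clique of G: there is a unique vertex set C such that C is a clique of G, C is maximal among cliques of G under inclusion, and i ∈ C and j ∈ C. (Paper's Theorem 4(a), attributed to Frydenberg and Lauritzen.) -/
/-! Once the edge `{i, j}` is deleted, two non-adjacent common neighbours `a` and `b` of `i` and `j`
would make `i`, `a`, `j`, `b` an induced four-cycle. Hence the common neighbours form a clique, and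
adding `i` and `j` to it gives the greatest clique containing the edge. -/

section

open SimpleGraph

variable {V : Type*} {G : SimpleGraph V}

theorem adj_or_adj_of_isEmpty_cycleGraph_four_embedding (hG : IsEmpty (cycleGraph 4 ↪g G))
    {a b c d : V} (hab : G.Adj a b) (hbc : G.Adj b c) (hcd : G.Adj c d) (hda : G.Adj d a)
    (hac : a ≠ c) (hbd : b ≠ d) : G.Adj a c ∨ G.Adj b d := by
  by_contra! ⟨hnac, hnbd⟩
  have injective : Function.Injective ![a, b, c, d] := by
    rw [← List.nodup_ofFn]
    simp [hab.ne, hbc.ne, hcd.ne, hda.ne', hac, hbd]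
  refine hG.false ⟨⟨![a, b, c, d], injective⟩, fun {x y} => ?_⟩
  fin_cases x <;> fin_cases y <;>
    simp +decide [hab, hab.symm, hbc, hbc.symm, hcd, hcd.symm, hda, hda.symm,
      hnac, mt Adj.symm hnac, hnbd, mt Adj.symm hnbd]

theorem isClique_commonNeighbors_of_not_adj (hG : IsEmpty (cycleGraph 4 ↪g G)) {i j : V}
    (hij : i ≠ j) (hnij : ¬G.Adj i j) : G.IsClique (G.commonNeighbors i j) := by
  rintro a ⟨hia, hja⟩ b ⟨hib, hjb⟩ hab
  exact (adj_or_adj_of_isEmpty_cycleGraph_four_embedding hG hia hja.symm hjb hib.symm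
    hij hab).resolve_left hnij

theorem commonNeighbors_deleteEdges_pair (G : SimpleGraph V) (i j : V) :
    (G.deleteEdges {s(i, j)}).commonNeighbors i j = G.commonNeighbors i j := by
  ext v
  simp only [mem_commonNeighbors, deleteEdges_adj, Set.mem_singleton_iff]
  constructor
  · rintro ⟨⟨hiv, -⟩, hjv, -⟩
    exact ⟨hiv, hjv⟩
  · rintro ⟨hiv, hjv⟩
    simp [hiv, hjv, hiv.ne', hjv.ne']

theorem isClique_commonNeighbors_of_deleteEdges {i j : V} (hij : i ≠ j)
    (hG' : IsEmpty (cycleGraph 4 ↪g G.deleteEdges {s(i, j)})) :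
    G.IsClique (G.commonNeighbors i j) := by
  have hclique := isClique_commonNeighbors_of_not_adj hG' hij (by simp [deleteEdges_adj])
  rw [commonNeighbors_deleteEdges_pair] at hclique
  exact hclique.mono (deleteEdges_le _)

theorem isGreatest_insert_insert_commonNeighbors {i j : V} (hij : G.Adj i j)
    (hN : G.IsClique (G.commonNeighbors i j)) :
    IsGreatest {C | G.IsClique C ∧ i ∈ C ∧ j ∈ C}
      (insert i (insert j (G.commonNeighbors i j))) := by
  refine ⟨⟨?_, by simp, by simp⟩, ?_⟩
  · have hjN : G.IsClique (insert j (G.commonNeighbors i j)) :=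
      hN.insert fun v hv _ => hv.2
    refine hjN.insert ?_
    rintro v (rfl | hv) -
    exacts [hij, hv.1]
  · rintro D ⟨hD, hiD, hjD⟩ v hv
    by_cases hvi : v = i
    · exact Or.inl hvi
    by_cases hvj : v = j
    · exact Or.inr (Or.inl hvj)
    exact Or.inr (Or.inr ⟨hD hiD hv (Ne.symm hvi), hD hjD hv (Ne.symm hvj)⟩)

end

theorem edge_in_unique_maximal_clique_general {V : Type*} (G : SimpleGraph V) (i j : V)
    (hij : G.Adj i j)
    (hG' : IsEmpty (SimpleGraph.cycleGraph 4 ↪g G.deleteEdges {s(i, j)})) :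
    ∃! C : Set V, G.IsClique C ∧ (∀ D : Set V, G.IsClique D → C ⊆ D → D = C) ∧ i ∈ C ∧ j ∈ C := by
  obtain ⟨⟨hC, hi, hj⟩, greatest⟩ := isGreatest_insert_insert_commonNeighbors hij
    (isClique_commonNeighbors_of_deleteEdges hij.ne hG')
  refine ⟨_, ⟨hC, fun D hD hCD => ?_, hi, hj⟩, ?_⟩
  · exact (greatest ⟨hD, hCD hi, hCD hj⟩).antisymm hCD
  · rintro D ⟨hD, maximal, hiD, hjD⟩
    exact (maximal _ hC (greatest ⟨hD, hiD, hjD⟩)).symm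

/-- If `G` is chordal and deleting the edge `{i, j}` of `G` leaves a chordal graph, then
the edge `{i, j}` lies in a unique maximal clique of `G`. -/
theorem edge_in_unique_maximal_clique {V : Type*} [Fintype V] (G : SimpleGraph V)
    (hG : IsChordal G) (i j : V) (hij : G.Adj i j)
    (hG' : IsChordal (G.deleteEdges {s(i, j)})) :
    ∃! C : Set V, G.IsClique C ∧ (∀ D : Set V, G.IsClique D → C ⊆ D → D = C) ∧ i ∈ C ∧ j ∈ C :=
  edge_in_unique_maximal_clique_general G i j hij (hG' 4 le_rfl)
end

section
/- For every p ≥ 4, every chordal simple graph H on Fin p that contains the p-cycle as a subgraph (cycleGraph p ≤ H) has at least 2p − 3 edges; equivalently, turning the chordless p-cycle into a chordal graph by adding edges ('fill-ins') requires at least p − 3 additional edges. (The paper asserts that the p-cycle 'requires a minimum of p−3 fill ins'.) -/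
/-!
In a chordal graph every edge `uv` that is not a bridge lies in a triangle: a shortest walk from
`u` to `v` avoiding the edge is an induced path, so together with `uv` it is an induced cycle,
hence of length three.
Now let `uv` close up a path of length at least two, and apply this to the graph induced on the
path. The apex of the triangle cuts the path into two shorter ones, each of them again closed up by
an edge; the two vertex sets share only the apex, so no edge is counted twice, and `uv` itself is
counted in neither. By induction a path of length `l` with adjacent ends spans at least `2 * l - 1`
edges; an `n`-cycle is such a path with `l = n - 1`.
-/

open SimpleGraph

variable {V : Type*} {G : SimpleGraph V} {u v : V}

lemma cycleGraph_succ_eq_pathGraph_sup_edge (n : ℕ) :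
    cycleGraph (n + 1) = pathGraph (n + 1) ⊔ edge 0 (Fin.last n) := by
  ext a b
  rw [cycleGraph_adj', sup_adj, pathGraph_adj, edge_adj]
  simp only [Fin.ext_iff, Fin.val_zero, Fin.val_last, ne_eq]
  rcases lt_trichotomy a b with h | rfl | h
  · rw [Fin.coe_sub_iff_lt.2 h, Fin.coe_sub_iff_le.2 h.le]
    omega
  · simp
  · rw [Fin.coe_sub_iff_lt.2 h, Fin.coe_sub_iff_le.2 h.le]
    omega

lemma nonempty_cycleGraph_embedding_sup_edge {n : ℕ} (f : pathGraph (n + 1) ↪g G) :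
    Nonempty (cycleGraph (n + 1) ↪g G ⊔ edge (f 0) (f (Fin.last n))) := by
  rw [cycleGraph_succ_eq_pathGraph_sup_edge]
  refine ⟨⟨f.toEmbedding, fun {a b} ↦ ?_⟩⟩
  simp [edge_adj]

lemma adj_getVert_iff_of_length_eq_dist {p : G.Walk u v} (hp : p.length = G.dist u v) {i j : ℕ}
    (hi : i ≤ p.length) (hj : j ≤ p.length) :
    G.Adj (p.getVert i) (p.getVert j) ↔ i + 1 = j ∨ j + 1 = i := by
  have no_shortcut : ∀ {i j}, j ≤ p.length → G.Adj (p.getVert i) (p.getVert j) → j ≤ i + 1 := by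
    intro i j hj h
    have := dist_le ((p.take i).append (.cons h (p.drop j)))
    simp only [Walk.length_append, Walk.length_cons, Walk.take_length, Walk.drop_length] at this
    omega
  constructor
  · intro h
    have hne : i ≠ j := by
      rintro rfl
      exact h.ne rfl
    have := no_shortcut hj h
    have := no_shortcut hi h.symm
    omega
  · rintro (rfl | rfl)
    · exact p.adj_getVert_succ hj
    · exact (p.adj_getVert_succ hi).symm

lemma exists_pathGraph_embedding_of_length_eq_dist {p : G.Walk u v} (hp : p.length = G.dist u v) :
    ∃ f : pathGraph (p.length + 1) ↪g G, f 0 = u ∧ f (Fin.last _) = v := by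
  have hinj := (p.isPath_of_length_eq_dist hp).getVert_injOn
  refine ⟨⟨⟨fun i ↦ p.getVert i, fun i j h ↦ Fin.ext (hinj i.is_le j.is_le h)⟩, ?_⟩,
    p.getVert_zero, p.getVert_length⟩
  intro i j
  exact (adj_getVert_iff_of_length_eq_dist hp i.is_le j.is_le).trans pathGraph_adj.symm

namespace IsChordal

lemma of_embedding {W : Type*} {H : SimpleGraph W} (hG : IsChordal G) (f : H ↪g G) :
    IsChordal H :=
  fun n hn ↦ ⟨fun g ↦ (hG n hn).false (f.comp g)⟩

lemma edist_le_two_of_sup_edge (h : IsChordal (G ⊔ edge u v)) (hr : G.Reachable u v) :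
    G.edist u v ≤ 2 := by
  obtain ⟨p, hp⟩ := hr.exists_walk_length_eq_dist
  obtain ⟨f, hu, hv⟩ := exists_pathGraph_embedding_of_length_eq_dist hp
  obtain ⟨g⟩ := nonempty_cycleGraph_embedding_sup_edge f
  rw [hu, hv] at g
  rw [← hr.coe_dist_eq_edist, ← hp]
  by_contra! hlt
  have hlength : 2 < p.length := by exact_mod_cast hlt
  exact (h (p.length + 1) (by omega)).false g

lemma commonNeighbors_nonempty_of_not_isBridge (hG : IsChordal G) (huv : G.Adj u v)
    (hb : ¬ G.IsBridge s(u, v)) : (G.commonNeighbors u v).Nonempty := by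
  set K := G.deleteEdges {s(u, v)} with hK
  have hreach : K.Reachable u v := by rwa [isBridge_iff, not_not] at hb
  have hsup : K ⊔ edge u v = G := sdiff_sup_cancel ((edge_le_iff G).2 (.inr huv))
  have hdist : K.edist u v ≤ 2 := edist_le_two_of_sup_edge (hsup.symm ▸ hG) hreach
  have hnadj : ¬ K.Adj u v := by simp [hK]
  have hmono : K.commonNeighbors u v ⊆ G.commonNeighbors u v := fun w hw ↦
    ⟨deleteEdges_le _ hw.1, deleteEdges_le _ hw.2⟩
  by_contra! hempty
  exact hdist.not_gt (two_lt_edist_iff.2 ⟨huv.ne, hnadj, Set.subset_eq_empty hmono hempty⟩)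

lemma exists_mem_support_adj_adj (hG : IsChordal G) (huv : G.Adj u v) (p : G.Walk u v)
    (hp : s(u, v) ∉ p.edges) : ∃ w ∈ p.support, G.Adj u w ∧ G.Adj w v := by
  let S : Set V := {w | w ∈ p.support}
  let u' : S := ⟨u, p.start_mem_support⟩
  let v' : S := ⟨v, p.end_mem_support⟩
  let q : (G.induce S).Walk u' v' := p.induce S fun _ ↦ id
  have hedges : q.edges.map (Sym2.map (↑)) = p.edges :=
    (Walk.edges_map _ q).symm.trans (congrArg Walk.edges (p.map_induce fun _ ↦ id))
  have hadj : (G.induce S).Adj u' v' := huv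
  have hbridge : ¬ (G.induce S).IsBridge s(u', v') := fun hb ↦
    hp (hedges ▸ List.mem_map_of_mem (isBridge_iff_forall_walk_mem_edges.1 hb q))
  obtain ⟨w, huw, hvw⟩ :=
    (hG.of_embedding (.induce S)).commonNeighbors_nonempty_of_not_isBridge hadj hbridge
  exact ⟨w, w.2, huw, hvw.symm⟩

end IsChordal

/-- The edges of the induced subgraph `G[s]`, encoded as unordered pairs of vertices of `G` rather
than of the subtype `s`, so that edges spanned by different vertex sets can be compared. -/
def spannedEdges (G : SimpleGraph V) (s : Set V) : Set (Sym2 V) :=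
  G.edgeSet ∩ s.sym2

lemma spannedEdges_mono {s t : Set V} (hst : s ⊆ t) : spannedEdges G s ⊆ spannedEdges G t := by
  rintro ⟨x, y⟩ ⟨hxy, hx, hy⟩
  exact ⟨hxy, hst hx, hst hy⟩

lemma disjoint_spannedEdges {s t : Set V} (hst : (s ∩ t).Subsingleton) :
    Disjoint (spannedEdges G s) (spannedEdges G t) := by
  rw [Set.disjoint_left]
  rintro ⟨x, y⟩ ⟨hxy, hxs, hys⟩ ⟨-, hxt, hyt⟩
  exact G.ne_of_adj hxy (hst ⟨hxs, hxt⟩ ⟨hys, hyt⟩)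

lemma encard_add_encard_add_one_le_union {s t : Set V} (hst : (s ∩ t).Subsingleton)
    (huv : G.Adj u v) (hu : u ∈ s \ t) (hv : v ∈ t \ s) :
    (spannedEdges G s).encard + (spannedEdges G t).encard + 1 ≤
      (spannedEdges G (s ∪ t)).encard := by
  have hnot : s(u, v) ∉ spannedEdges G s ∪ spannedEdges G t := by
    rintro (⟨-, -, hvs⟩ | ⟨-, hut, -⟩)
    exacts [hv.2 hvs, hu.2 hut]
  rw [← Set.encard_union_eq (disjoint_spannedEdges hst), ← Set.encard_insert_of_notMem hnot]
  refine Set.encard_le_encard (Set.insert_subset ⟨huv, .inl hu.1, .inr hv.1⟩ ?_)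
  exact Set.union_subset (spannedEdges_mono Set.subset_union_left)
    (spannedEdges_mono Set.subset_union_right)

lemma encard_add_encard_add_one_le_append {w : V} {q : G.Walk u w} {r : G.Walk w v}
    (hqr : (q.append r).IsPath) (huv : G.Adj u v) (huw : u ≠ w) (hwv : w ≠ v) :
    (spannedEdges G {x | x ∈ q.support}).encard + (spannedEdges G {x | x ∈ r.support}).encard + 1 ≤
      (spannedEdges G {x | x ∈ (q.append r).support}).encard := by
  have hinter : ∀ x ∈ q.support, x ∈ r.support → x = w := fun x hq hr ↦ by
    by_contra hxw
    exact hqr.ne_of_mem_support_of_append hxw hq hr rfl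
  have hunion : {x | x ∈ (q.append r).support} = {x | x ∈ q.support} ∪ {x | x ∈ r.support} :=
    Set.ext fun _ ↦ Walk.mem_support_append_iff q r
  rw [hunion]
  refine encard_add_encard_add_one_le_union ?_ huv
    ⟨q.start_mem_support, ?_⟩ ⟨r.end_mem_support, ?_⟩
  · exact fun x hx y hy ↦ (hinter x hx.1 hx.2).trans (hinter y hy.1 hy.2).symm
  · exact fun hu ↦ huw (hinter u q.start_mem_support hu)
  · exact fun hv ↦ hwv (hinter v hv r.end_mem_support).symm

theorem IsChordal.two_mul_length_le_encard_spannedEdges (hG : IsChordal G) (huv : G.Adj u v)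
    {p : G.Walk u v} (hp : p.IsPath) :
    2 * (p.length : ℕ∞) ≤ (spannedEdges G {w | w ∈ p.support}).encard + 1 := by
  induction hl : p.length using Nat.strong_induction_on generalizing u v with | _ l ih => ?_
  subst hl
  by_cases hmem : s(u, v) ∈ p.edges
  · have hone : 1 ≤ (spannedEdges G {w | w ∈ p.support}).encard :=
      Set.one_le_encard_iff_nonempty.2 ⟨s(u, v), huv, p.start_mem_support, p.end_mem_support⟩
    rw [hp.length_eq_one_of_mem_edges hmem, Nat.cast_one, mul_one, ← one_add_one_eq_two]
    gcongr
  obtain ⟨w, hw, huw, hwv⟩ := hG.exists_mem_support_adj_adj huv p hmem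
  obtain ⟨q, r, hq, hr, rfl⟩ := hp.mem_support_iff_exists_append.1 hw
  have hq_pos : 0 < q.length := Walk.not_nil_iff_lt_length.1 (Walk.not_nil_of_ne huw.ne)
  have hr_pos : 0 < r.length := Walk.not_nil_iff_lt_length.1 (Walk.not_nil_of_ne hwv.ne)
  rw [Walk.length_append] at ih ⊢
  calc 2 * ((q.length + r.length : ℕ) : ℕ∞) = 2 * (q.length : ℕ∞) + 2 * (r.length : ℕ∞) := by
        push_cast; ring
    _ ≤ ((spannedEdges G {x | x ∈ q.support}).encard + 1) +
          ((spannedEdges G {x | x ∈ r.support}).encard + 1) :=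
        add_le_add (ih _ (by omega) huw hq rfl) (ih _ (by omega) hwv hr rfl)
    _ = (spannedEdges G {x | x ∈ q.support}).encard +
          (spannedEdges G {x | x ∈ r.support}).encard + 1 + 1 := by ring
    _ ≤ (spannedEdges G {x | x ∈ (q.append r).support}).encard + 1 := by
        gcongr
        exact encard_add_encard_add_one_le_append hp huv huw.ne hwv.ne

theorem cycle_fill_in_lower_bound_general (hG : IsChordal G) {n : ℕ} (hn : 3 ≤ n)
    (hcycle : cycleGraph n ⊑ G) : 2 * (n : ℕ∞) ≤ G.edgeSet.encard + 3 := by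
  obtain ⟨v, c, hc, rfl⟩ := (cycleGraph_isContained_iff hn).1 hcycle
  calc 2 * (c.length : ℕ∞) = 2 * (c.tail.length : ℕ∞) + 2 := by
        rw [← Walk.length_tail_add_one hc.not_nil]; push_cast; ring
    _ ≤ ((spannedEdges G {w | w ∈ c.tail.support}).encard + 1) + 2 := by
        gcongr
        exact hG.two_mul_length_le_encard_spannedEdges (c.adj_snd hc.not_nil).symm hc.isPath_tail
    _ ≤ (G.edgeSet.encard + 1) + 2 := by
        gcongr
        exact Set.inter_subset_left
    _ = G.edgeSet.encard + 3 := by ring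

/-- Any chordal graph on `Fin p` containing the `p`-cycle as a subgraph has at least
`2p - 3` edges: chordalizing the `p`-cycle requires at least `p - 3` fill-in edges. -/
theorem cycle_fill_in_lower_bound (p : ℕ) (hp : 4 ≤ p) (H : SimpleGraph (Fin p))
    (hH : IsChordal H) (hsub : SimpleGraph.cycleGraph p ≤ H) :
    2 * p - 3 ≤ H.edgeSet.ncard := by
  have h := cycle_fill_in_lower_bound_general hH (by omega) (IsContained.of_le hsub)
  rw [← H.edgeSet.toFinite.cast_ncard_eq] at h
  exact Nat.sub_le_of_le_add (by exact_mod_cast h)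
end

section
/- Let p ≥ 4, set r = p(p−1)/2, and let G be a simple graph on Fin p with exactly r − 2 edges (i.e. exactly two missing vertex pairs). Then G is not chordal if and only if the two missing pairs are vertex-disjoint, i.e. there exist four pairwise distinct vertices a, b, c, d with ¬G.Adj a b and ¬G.Adj c d. (This is the content of the proof of the paper's Lemma 2, part 2: a graph with r−2 edges is nondecomposable exactly when its two non-edges are the chords of a 4-cycle.) -/
/-!
An induced cycle `v₀ v₁ v₂ v₃ …` of length at least four misses the chords `v₀v₂` and `v₁v₃`, which
are vertex-disjoint. Conversely, if `ab` and `cd` are vertex-disjoint and the only non-edges of `G`,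
then `a c b d` is a 4-cycle whose two chords are missing.
-/

section

open SimpleGraph

variable {V : Type*} {G : SimpleGraph V}

theorem not_cycleGraph_adj_add_two {n : ℕ} (i : Fin (n + 4)) :
    ¬ (cycleGraph (n + 4)).Adj i (i + 2) := by
  have neg_two_ne_one : (-2 : Fin (n + 4)) ≠ 1 := by
    rw [ne_eq, neg_eq_iff_add_eq_zero]
    simp [Fin.ext_iff, Fin.val_add, Nat.mod_eq_of_lt]
  have two_ne_one : (2 : Fin (n + 4)) ≠ 1 := by simp [Fin.ext_iff, Nat.mod_eq_of_lt]
  simp [cycleGraph_adj, neg_two_ne_one, two_ne_one]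

theorem cycleGraph_four_adj_iff {i j : Fin 4} :
    (cycleGraph 4).Adj i j ↔ i.val % 2 ≠ j.val % 2 := by
  revert i j
  decide

theorem exists_disjoint_nonadj_of_cycleGraph_embedding {n : ℕ} (f : cycleGraph (n + 4) ↪g G) :
    ∃ a b c d : V, a ≠ b ∧ a ≠ c ∧ a ≠ d ∧ b ≠ c ∧ b ≠ d ∧ c ≠ d ∧
      ¬ G.Adj a b ∧ ¬ G.Adj c d := by
  have chord_not_adj (i : Fin (n + 4)) : ¬ G.Adj (f i) (f (i + 2)) := by
    rw [f.map_adj_iff]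
    exact not_cycleGraph_adj_add_two i
  refine ⟨f 0, f (0 + 2), f 1, f (1 + 2), ?_, ?_, ?_, ?_, ?_, ?_,
    chord_not_adj 0, chord_not_adj 1⟩
  all_goals
    rw [f.injective.ne_iff]
    simp [Fin.ext_iff, Fin.val_add, Nat.mod_eq_of_lt]

theorem exists_disjoint_nonadj_of_not_isChordal (h : ¬ IsChordal G) :
    ∃ a b c d : V, a ≠ b ∧ a ≠ c ∧ a ≠ d ∧ b ≠ c ∧ b ≠ d ∧ c ≠ d ∧
      ¬ G.Adj a b ∧ ¬ G.Adj c d := by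
  simp only [IsChordal, not_forall, not_isEmpty_iff] at h
  obtain ⟨n, hn, ⟨f⟩⟩ := h
  obtain ⟨m, rfl⟩ := Nat.exists_eq_add_of_le' hn
  exact exists_disjoint_nonadj_of_cycleGraph_embedding f

theorem not_isChordal_of_chordless_four_cycle {a b c d : V} (hab : G.Adj a b) (hbc : G.Adj b c)
    (hcd : G.Adj c d) (hda : G.Adj d a) (hac : Gᶜ.Adj a c) (hbd : Gᶜ.Adj b d) :
    ¬ IsChordal G := by
  have hinj : Function.Injective ![a, b, c, d] := by
    have hnodup : [a, b, c, d].Nodup := by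
      simp [hab.ne, hbc.ne, hcd.ne, hda.ne', hac.ne, hbd.ne]
    rwa [← List.nodup_ofFn]
  have hadj (i j : Fin 4) :
      G.Adj (![a, b, c, d] i) (![a, b, c, d] j) ↔ (cycleGraph 4).Adj i j := by
    fin_cases i <;> fin_cases j <;>
      simp [cycleGraph_four_adj_iff, hab, hbc, hcd, hda, hab.symm, hbc.symm, hcd.symm, hda.symm,
        hac.2, hbd.2, hac.symm.2, hbd.symm.2]
  exact fun hG ↦ (hG 4 le_rfl).false ⟨⟨![a, b, c, d], hinj⟩, hadj _ _⟩

theorem adj_of_ne_of_notMem_compl_edgeSet {x y : V} (hne : x ≠ y) (h : s(x, y) ∉ Gᶜ.edgeSet) :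
    G.Adj x y := by
  by_contra hnadj
  exact h ⟨hne, hnadj⟩

theorem ncard_edgeSet_add_ncard_compl_edgeSet [Finite V] (G : SimpleGraph V) :
    G.edgeSet.ncard + Gᶜ.edgeSet.ncard = (Nat.card V).choose 2 := by
  classical
  have := Fintype.ofFinite V
  have hdisj : Disjoint G.edgeSet Gᶜ.edgeSet := disjoint_edgeSet.mpr disjoint_compl_right
  rw [← Set.ncard_union_eq hdisj, ← edgeSet_sup, sup_compl_eq_top, ← coe_edgeFinset,
    Set.ncard_coe_finset, card_edgeFinset_top_eq_card_choose_two, Nat.card_eq_fintype_card]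

theorem encard_compl_edgeSet_le_of_choose_two_le_add [Finite V] {k : ℕ}
    (h : (Nat.card V).choose 2 ≤ G.edgeSet.ncard + k) : Gᶜ.edgeSet.encard ≤ k := by
  rw [← (Set.toFinite Gᶜ.edgeSet).cast_ncard_eq, Nat.cast_le]
  have := ncard_edgeSet_add_ncard_compl_edgeSet G
  lia

theorem not_chordal_iff_of_card_r_sub_two_general (hG : Gᶜ.edgeSet.encard ≤ 2) :
    ¬ IsChordal G ↔
      ∃ a b c d : V, a ≠ b ∧ a ≠ c ∧ a ≠ d ∧ b ≠ c ∧ b ≠ d ∧ c ≠ d ∧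
        ¬ G.Adj a b ∧ ¬ G.Adj c d := by
  constructor
  · exact exists_disjoint_nonadj_of_not_isChordal
  · rintro ⟨a, b, c, d, hab, hac, had, hbc, hbd, hcd, nab, ncd⟩
    have compl_ab : Gᶜ.Adj a b := ⟨hab, nab⟩
    have compl_cd : Gᶜ.Adj c d := ⟨hcd, ncd⟩
    have hne : s(a, b) ≠ s(c, d) := by simp [hac, had]
    have hpair : Gᶜ.edgeSet = {s(a, b), s(c, d)} := by
      refine ((Set.toFinite _).eq_of_subset_of_encard_le ?_ ?_).symm
      · exact Set.pair_subset compl_ab compl_cd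
      · rwa [Set.encard_pair hne]
    have hcross {x y : V} (hx : x ∈ ({a, b} : Set V)) (hy : y ∈ ({c, d} : Set V)) :
        G.Adj x y := by
      apply adj_of_ne_of_notMem_compl_edgeSet
      · grind
      · rw [hpair]
        grind
    exact not_isChordal_of_chordless_four_cycle (hcross (.inl rfl) (.inl rfl))
      (hcross (.inr rfl) (.inl rfl)).symm (hcross (.inr rfl) (.inr rfl))
      (hcross (.inl rfl) (.inr rfl)).symm compl_ab compl_cd

end

/-- A graph on `Fin p` with `r - 2` edges (`r = p(p-1)/2` the maximum) is non-chordal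
exactly when its two missing vertex pairs are vertex-disjoint. -/
theorem not_chordal_iff_of_card_r_sub_two (p : ℕ) (hp : 4 ≤ p) (r : ℕ)
    (hr : r = p * (p - 1) / 2) (G : SimpleGraph (Fin p)) (hG : G.edgeSet.ncard = r - 2) :
    ¬ IsChordal G ↔
      ∃ a b c d : Fin p, a ≠ b ∧ a ≠ c ∧ a ≠ d ∧ b ≠ c ∧ b ≠ d ∧ c ≠ d ∧
        ¬ G.Adj a b ∧ ¬ G.Adj c d := by
  have hcard : (Nat.card (Fin p)).choose 2 = r := by rw [Nat.card_fin, Nat.choose_two_right, hr]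
  exact not_chordal_iff_of_card_r_sub_two_general
    (encard_compl_edgeSet_le_of_choose_two_le_add (k := 2) (by lia))
end

section
/- Let G be a simple graph with exactly 4 edges. Then G is not chordal if and only if there exist four pairwise distinct vertices a, b, c, d such that the edge set of G is exactly { {a,b}, {b,c}, {c,d}, {d,a} }; that is, a 4-edge graph is non-chordal precisely when it consists of a chordless 4-cycle together with isolated vertices. (This is the content of the proof of the paper's Lemma 2, part 1.) -/
/-!
An `m`-cycle with `m ≥ 3` has `m` edges, so a graph with at most `n` edges has no room for an
induced cycle longer than `n`, and an induced cycle of length exactly `n` uses up all its edges.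
Conversely, a cycle together with isolated vertices contains that cycle as an induced subgraph.
-/

open SimpleGraph

section Edges

variable {V W : Type*}

theorem encard_edgeSet_map (f : V ↪ W) (G : SimpleGraph V) :
    (G.map f).edgeSet.encard = G.edgeSet.encard := by
  rw [edgeSet_map, f.sym2Map.injective.encard_image]

theorem map_le_of_embedding {H : SimpleGraph V} {G : SimpleGraph W} (f : H ↪g G) :
    H.map f.toEmbedding ≤ G :=
  (map_le_iff_le_comap _ _ _).mpr f.toHom.le_comap

theorem eq_of_le_of_encard_edgeSet_le {H G : SimpleGraph V} (hfin : H.edgeSet.Finite)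
    (hle : H ≤ G) (hcard : G.edgeSet.encard ≤ H.edgeSet.encard) : H = G :=
  edgeSet_injective (hfin.eq_of_subset_of_encard_le (edgeSet_mono hle) hcard)

end Edges

section Cycles

variable {V : Type*}

theorem encard_edgeSet_cycleGraph {n : ℕ} (hn : 3 ≤ n) :
    (cycleGraph n).edgeSet.encard = n := by
  obtain ⟨k, rfl⟩ := Nat.exists_eq_add_of_le' hn
  have handshake := (cycleGraph (k + 3)).sum_degrees_eq_twice_card_edges
  simp only [cycleGraph_degree_three_le, Finset.sum_const, Finset.card_univ, Fintype.card_fin,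
    smul_eq_mul] at handshake
  rw [← coe_edgeFinset, Set.encard_coe_eq_coe_finsetCard]
  exact_mod_cast (by omega : (cycleGraph (k + 3)).edgeFinset.card = k + 3)

theorem exists_cycleGraph_embedding_iff_eq_map {n : ℕ} (hn : 3 ≤ n) {G : SimpleGraph V}
    (hG : G.edgeSet.encard ≤ n) :
    (∃ m, n ≤ m ∧ Nonempty (cycleGraph m ↪g G)) ↔
      ∃ f : Fin n ↪ V, G = (cycleGraph n).map f := by
  constructor
  · rintro ⟨m, hnm, ⟨f⟩⟩
    have hcard : ((cycleGraph m).map f.toEmbedding).edgeSet.encard = m := by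
      rw [encard_edgeSet_map, encard_edgeSet_cycleGraph (hn.trans hnm)]
    have hle : (cycleGraph m).map f.toEmbedding ≤ G := map_le_of_embedding f
    have hmn : m ≤ n := by
      exact_mod_cast hcard.symm.le.trans ((Set.encard_le_encard (edgeSet_mono hle)).trans hG)
    obtain rfl : n = m := hnm.antisymm hmn
    exact ⟨f.toEmbedding, (eq_of_le_of_encard_edgeSet_le
      (Set.finite_of_encard_eq_coe hcard) hle (hG.trans hcard.ge)).symm⟩
  · rintro ⟨f, rfl⟩
    exact ⟨n, le_rfl, ⟨Embedding.map f (cycleGraph n)⟩⟩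

theorem edgeSet_cycleGraph_four :
    (cycleGraph 4).edgeSet = {s(0, 1), s(1, 2), s(2, 3), s(3, 0)} := by
  ext e
  revert e
  decide

theorem edgeSet_map_cycleGraph_four (f : Fin 4 ↪ V) :
    ((cycleGraph 4).map f).edgeSet =
      {s(f 0, f 1), s(f 1, f 2), s(f 2, f 3), s(f 3, f 0)} := by
  simp [edgeSet_map, edgeSet_cycleGraph_four, Set.image_insert_eq]

end Cycles

theorem exists_embedding_fin_four_iff {α : Type*} {p : α → α → α → α → Prop} :
    (∃ f : Fin 4 ↪ α, p (f 0) (f 1) (f 2) (f 3)) ↔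
      ∃ a b c d, a ≠ b ∧ a ≠ c ∧ a ≠ d ∧ b ≠ c ∧ b ≠ d ∧ c ≠ d ∧ p a b c d := by
  constructor
  · rintro ⟨f, hf⟩
    exact ⟨f 0, f 1, f 2, f 3, by simpa using hf⟩
  · rintro ⟨a, b, c, d, hab, hac, had, hbc, hbd, hcd, h⟩
    have hinj : Function.Injective ![a, b, c, d] := List.nodup_ofFn.mp (by simp [*])
    exact ⟨⟨_, hinj⟩, h⟩

theorem not_isChordal_iff {V : Type*} {G : SimpleGraph V} :
    ¬ IsChordal G ↔ ∃ n, 4 ≤ n ∧ Nonempty (cycleGraph n ↪g G) := by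
  simp only [IsChordal, not_forall, not_isEmpty_iff, exists_prop]

theorem not_chordal_iff_of_four_edges_general {V : Type*} {G : SimpleGraph V}
    (hG : G.edgeSet.encard ≤ 4) :
    ¬ IsChordal G ↔
      ∃ a b c d : V, a ≠ b ∧ a ≠ c ∧ a ≠ d ∧ b ≠ c ∧ b ≠ d ∧ c ≠ d ∧
        G.edgeSet = {s(a, b), s(b, c), s(c, d), s(d, a)} := by
  rw [not_isChordal_iff, exists_cycleGraph_embedding_iff_eq_map (by norm_num) hG,
    ← exists_embedding_fin_four_iff]
  simp only [← edgeSet_map_cycleGraph_four, edgeSet_inj]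

/-- A simple graph with exactly `4` edges is non-chordal precisely when its edge set is a
chordless `4`-cycle `{a,b}, {b,c}, {c,d}, {d,a}` on four distinct vertices. -/
theorem not_chordal_iff_of_four_edges {V : Type*} (G : SimpleGraph V)
    (hG : G.edgeSet.ncard = 4) :
    ¬ IsChordal G ↔
      ∃ a b c d : V, a ≠ b ∧ a ≠ c ∧ a ≠ d ∧ b ≠ c ∧ b ≠ d ∧ c ≠ d ∧
        G.edgeSet = {s(a, b), s(b, c), s(c, d), s(d, a)} := by
  have hfin : G.edgeSet.Finite := Set.finite_of_ncard_ne_zero (by simp [hG])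
  exact not_chordal_iff_of_four_edges_general (by simp [← hfin.cast_ncard_eq, hG])
end
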